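/- Let A be a unital C*-algebra, n,m ≥ 1, q ∈ ℂ with |q| < 1, and let s_1,…,s_n, t_1,…,t_m ∈ A satisfy the E_{n,m}^q-relations. Define c = (1−Q) + (1−|q|²)^{−1/2} Q (the inverse of the positive square root of 1 − |q|² Q, since Q is a projection) and t̂_r = (1−Q) t_r c for r = 1,…,m. Then s_i* t̂_r = 0 for all i = 1,…,n and r = 1,…,m, and t̂_r* t̂_l = δ_{rl}·1 for all r,l = 1,…,m; in particular each t̂_r is an isometry. -/

import Mathlib

open scoped BigOperators

/-!
Write `D a = (1 - Q) + a • Q`. Since `Q` is a projection, `a ↦ D a` is multiplicative and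
preserves stars. Moving the `s i` past the `t r` gives `(t r)* Q (t l) = δ_{rl} |q|² Q`, so the
compressions `(1 - Q) t r` have Gram matrix `δ_{rl} D (1 - |q|²)`. Multiplying on the right by
`D a` with `|a|² (1 - |q|²) = 1` therefore turns them into isometries with orthogonal ranges.
-/

section TwistedPair

variable {R A ι κ : Type*}

/-- A Toeplitz–Cuntz family: isometries with pairwise orthogonal ranges. -/
def IsToeplitzCuntzFamily [Semiring A] [Star A] [DecidableEq ι] (s : ι → A) : Prop :=
  ∀ i j, star (s i) * s j = if i = j then 1 else 0

/-- The element `Q = ∑ sᵢ sᵢ*`. For a Toeplitz–Cuntz family it is the sum of the range projections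
of the isometries. -/
def rangeProjection [NonUnitalNonAssocSemiring A] [Star A] [Fintype ι] (s : ι → A) : A :=
  ∑ i, s i * star (s i)

/-- The `E^q`-relations between the families `s` and `t`, over arbitrary index types and
with the scalar `q` in an arbitrary commutative semiring. -/
structure IsTwistedPair [CommSemiring R] [Semiring A] [Star A] [Algebra R A] [DecidableEq ι]
    [DecidableEq κ] (q : R) (s : ι → A) (t : κ → A) : Prop where
  left : IsToeplitzCuntzFamily s
  right : IsToeplitzCuntzFamily t
  star_mul_eq_smul : ∀ j r, star (s j) * t r = q • (t r * star (s j))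

/-- The element acting as the scalar `a` on the range of a projection `p` and as the identity on
its complement. -/
def dilation [Ring A] [SMul R A] (p : A) (a : R) : A :=
  (1 - p) + a • p

section RangeProjection

variable [Fintype ι]

theorem isSelfAdjoint_rangeProjection [NonUnitalSemiring A] [StarRing A] (s : ι → A) :
    IsSelfAdjoint (rangeProjection s) :=
  isSelfAdjoint_sum _ fun i _ => .mul_star_self (s i)

theorem star_mul_rangeProjection_mul_of_twisted [CommSemiring R] [Star R] [Semiring A] [StarRing A]
    [Algebra R A] [StarModule R A] {s : ι → A} {p q : R} {x y : A}
    (hx : ∀ i, star (s i) * x = p • (x * star (s i)))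
    (hy : ∀ i, star (s i) * y = q • (y * star (s i))) :
    star x * rangeProjection s * y =
      (star p * q) • ∑ i, s i * (star x * y) * star (s i) := by
  have hx_star (i : ι) : star x * s i = star p • (s i * star x) := by
    simpa only [star_mul, star_smul, star_star] using congrArg star (hx i)
  rw [rangeProjection, Finset.mul_sum, Finset.sum_mul, Finset.smul_sum]
  refine Finset.sum_congr rfl fun i _ => ?_
  calc star x * (s i * star (s i)) * y = (star x * s i) * (star (s i) * y) := by
        simp only [mul_assoc]
    _ = (star p * q) • (s i * (star x * y) * star (s i)) := by
        rw [hx_star, hy, smul_mul_smul_comm]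
        simp only [mul_assoc]

end RangeProjection

namespace IsToeplitzCuntzFamily

variable [Fintype ι] [DecidableEq ι] {s : ι → A}

theorem star_mul_rangeProjection [Semiring A] [Star A] (hs : IsToeplitzCuntzFamily s) (i : ι) :
    star (s i) * rangeProjection s = star (s i) := by
  simp [rangeProjection, Finset.mul_sum, ← mul_assoc, hs i]

theorem isStarProjection_rangeProjection [Semiring A] [StarRing A]
    (hs : IsToeplitzCuntzFamily s) : IsStarProjection (rangeProjection s) where
  isIdempotentElem := by
    calc (∑ i, s i * star (s i)) * rangeProjection s
        = ∑ i, s i * (star (s i) * rangeProjection s) := by simp only [Finset.sum_mul, mul_assoc]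
      _ = ∑ i, s i * star (s i) := by simp only [hs.star_mul_rangeProjection]
  isSelfAdjoint := isSelfAdjoint_rangeProjection s

theorem star_mul_one_sub_rangeProjection [Ring A] [Star A] (hs : IsToeplitzCuntzFamily s) (i : ι) :
    star (s i) * (1 - rangeProjection s) = 0 := by
  rw [mul_sub, mul_one, hs.star_mul_rangeProjection, sub_self]

end IsToeplitzCuntzFamily

section Dilation

variable [Ring A] {p : A}

theorem dilation_one [Monoid R] [MulAction R A] (p : A) : dilation p (1 : R) = 1 := by
  rw [dilation, one_smul, sub_add_cancel]

theorem dilation_mul_dilation [CommSemiring R] [Algebra R A] (hp : IsIdempotentElem p) (a b : R) :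
    dilation p a * dilation p b = dilation p (a * b) := by
  simp only [dilation, add_mul, mul_add, smul_mul_assoc, mul_smul_comm, hp.one_sub.eq, hp.eq,
    hp.mul_one_sub_self, hp.one_sub_mul_self, smul_zero, add_zero, zero_add, smul_smul,
    mul_comm b a]

theorem star_dilation [Star R] [StarRing A] [SMul R A] [StarModule R A] (hp : IsSelfAdjoint p)
    (a : R) : star (dilation p a) = dilation p (star a) := by
  simp only [dilation, star_add, star_sub, star_one, star_smul, hp.star_eq]

theorem one_sub_smul_eq_dilation [Ring R] [Module R A] (p : A) (b : R) :
    1 - b • p = dilation p (1 - b) := by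
  rw [dilation, sub_smul, one_smul, sub_add_sub_cancel]

end Dilation

namespace IsTwistedPair

variable [Fintype ι] [DecidableEq ι] [DecidableEq κ] {s : ι → A} {t : κ → A}

theorem star_mul_rangeProjection_mul [CommSemiring R] [Star R] [Semiring A] [StarRing A]
    [Algebra R A] [StarModule R A] {q : R} (h : IsTwistedPair q s t) (r l : κ) :
    star (t r) * rangeProjection s * t l =
      if r = l then (star q * q) • rangeProjection s else 0 := by
  rw [star_mul_rangeProjection_mul_of_twisted (h.star_mul_eq_smul · r) (h.star_mul_eq_smul · l),
    h.right r l]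
  split_ifs <;> simp [rangeProjection]

variable [CommRing R] [Star R] [Ring A] [StarRing A] [Algebra R A] [StarModule R A] {q : R}

theorem star_mul_one_sub_rangeProjection_mul (h : IsTwistedPair q s t) (r l : κ) :
    star (t r) * (1 - rangeProjection s) * t l =
      if r = l then dilation (rangeProjection s) (1 - star q * q) else 0 := by
  rw [mul_sub, mul_one, sub_mul, h.right r l, h.star_mul_rangeProjection_mul]
  split_ifs
  · exact one_sub_smul_eq_dilation _ _
  · exact sub_zero 0

theorem isToeplitzCuntzFamily_compression_mul_dilation (h : IsTwistedPair q s t) {a : R}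
    (ha : star a * (1 - star q * q) * a = 1) :
    IsToeplitzCuntzFamily fun r =>
      (1 - rangeProjection s) * t r * dilation (rangeProjection s) a := by
  intro r l
  have hQ : IsStarProjection (rangeProjection s) := h.left.isStarProjection_rangeProjection
  set Q := rangeProjection s
  calc star ((1 - Q) * t r * dilation Q a) * ((1 - Q) * t l * dilation Q a)
      = dilation Q (star a) * (star (t r) * ((1 - Q) * (1 - Q)) * t l) * dilation Q a := by
        simp only [star_mul, star_dilation hQ.isSelfAdjoint,
          hQ.one_sub.isSelfAdjoint.star_eq, mul_assoc]
    _ = dilation Q (star a) * (if r = l then dilation Q (1 - star q * q) else 0) *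
          dilation Q a := by
        rw [hQ.one_sub.isIdempotentElem.eq, h.star_mul_one_sub_rangeProjection_mul]
    _ = if r = l then 1 else 0 := by
        split_ifs
        · simp only [dilation_mul_dilation hQ.isIdempotentElem, ha, dilation_one]
        · rw [mul_zero, zero_mul]

end IsTwistedPair

theorem star_inv_sqrt_mul_one_sub_mul_inv_sqrt {𝕜 : Type*} [RCLike 𝕜] {q : 𝕜} (hq : ‖q‖ < 1) :
    star (((√(1 - ‖q‖ ^ 2))⁻¹ : ℝ) : 𝕜) * (1 - star q * q) * (((√(1 - ‖q‖ ^ 2))⁻¹ : ℝ) : 𝕜) =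
      1 := by
  have hpos : 0 < 1 - ‖q‖ ^ 2 := sub_pos.mpr (pow_lt_one₀ (norm_nonneg q) hq two_ne_zero)
  have hreal : (√(1 - ‖q‖ ^ 2))⁻¹ * (1 - ‖q‖ ^ 2) * (√(1 - ‖q‖ ^ 2))⁻¹ = 1 := by
    rw [mul_right_comm, ← mul_inv, Real.mul_self_sqrt hpos.le, inv_mul_cancel₀ hpos.ne']
  rw [RCLike.star_def, RCLike.conj_ofReal, RCLike.conj_mul]
  exact_mod_cast hreal

theorem stmt_5_general [CommRing R] [Star R] [Ring A] [StarRing A] [Algebra R A] [StarModule R A]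
    [Fintype ι] [DecidableEq ι] [DecidableEq κ] {q a : R}
    (ha : star a * (1 - star q * q) * a = 1) {s : ι → A} {t : κ → A} (h : IsTwistedPair q s t)
    {th : κ → A}
    (hth : ∀ r, th r = (1 - rangeProjection s) * t r * dilation (rangeProjection s) a) :
    (∀ i r, star (s i) * th r = 0) ∧ IsToeplitzCuntzFamily th := by
  refine ⟨fun i r => ?_, ?_⟩
  · rw [hth, ← mul_assoc, ← mul_assoc, h.left.star_mul_one_sub_rangeProjection, zero_mul, zero_mul]
  · rw [funext hth]
    exact h.isToeplitzCuntzFamily_compression_mul_dilation ha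

end TwistedPair

theorem stmt_5 {A : Type*} [NormedRing A] [StarRing A] [CStarRing A]
    [NormedAlgebra ℂ A] [StarModule ℂ A] [CompleteSpace A]
    {n m : ℕ} (hn : 1 ≤ n) (hm : 1 ≤ m) (q : ℂ) (hq : ‖q‖ < 1)
    (s : Fin n → A) (t : Fin m → A)
    (hs : ∀ i j : Fin n, star (s i) * s j = if i = j then 1 else 0)
    (ht : ∀ r l : Fin m, star (t r) * t l = if r = l then 1 else 0)
    (hst : ∀ (j : Fin n) (r : Fin m), star (s j) * t r = q • (t r * star (s j)))
    (Q : A) (hQ : Q = ∑ i : Fin n, s i * star (s i))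
    (c : A) (hc : c = (1 - Q) + (((Real.sqrt (1 - ‖q‖ ^ 2))⁻¹ : ℝ) : ℂ) • Q)
    (th : Fin m → A) (hth : ∀ r, th r = (1 - Q) * t r * c) :
    (∀ (i : Fin n) (r : Fin m), star (s i) * th r = 0) ∧
    (∀ r l : Fin m, star (th r) * th l = if r = l then 1 else 0) := by
  subst hc hQ
  exact stmt_5_general (star_inv_sqrt_mul_one_sub_mul_inv_sqrt hq) ⟨hs, ht, hst⟩ hth
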